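/- For v ∈ V define the boson field operator φ(v) on ℝ-differentiable functions F : V → ℂ by (φ(v)F)(u) := −√2·i·(½⟨u,v⟩·F(u) − (DF)(u)(v)), where (DF)(u) denotes the real Fréchet derivative of F at u. Then for every twice continuously differentiable F : V → ℂ and all v, w ∈ V, the canonical commutation relation φ(v)(φ(w)F) − φ(w)(φ(v)F) = 2i·s(v,w)·F holds pointwise on V. -/

import Mathlib

/-!
Write `φ(v) = c (M_v - D_v)` with `c = -√2 i`, `M_v` multiplication by `u ↦ ½⟨u,v⟩` and `D_v` the
directional derivative. The multiplications commute, and so do `D_v` and `D_w` on `C²` functions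
by the symmetry of the second derivative, so only the cross terms of the commutator survive.
Since `u ↦ ⟨u,v⟩` is real-linear, they give `c² · ½(⟨w,v⟩ - ⟨v,w⟩) = ⟨v,w⟩ - ⟨w,v⟩`.
This equals `2i·d(Jv,w)` because `J` is skew-adjoint for `d`.
The composite `φ(v)φ(w)F` is computed in `bosonField_bosonField`.
-/

open scoped RealInnerProductSpace

/-- The complex scalar product `⟨u,v⟩ := d(u,v) + i·d(Ju,v)` on `V` (antilinear in `u`)
associated to the complex structure `J`. -/
noncomputable def cInner {V : Type*} [NormedAddCommGroup V] [InnerProductSpace ℝ V]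
    (J : Module.End ℝ V) (u v : V) : ℂ :=
  Complex.ofReal ⟪u, v⟫ + Complex.ofReal ⟪J u, v⟫ * Complex.I

/-- The boson field operator
`(φ(v)F)(u) := −√2·i·(½⟨u,v⟩·F(u) − (DF)(u)(v))`, where `(DF)(u)` is the real Fréchet
derivative of `F` at `u`. -/
noncomputable def bosonField {V : Type*} [NormedAddCommGroup V] [InnerProductSpace ℝ V]
    (J : Module.End ℝ V) (v : V) (F : V → ℂ) : V → ℂ :=
  fun u => -(Real.sqrt 2 : ℂ) * Complex.I *
    ((2⁻¹ : ℂ) * cInner J u v * F u - fderiv ℝ F u v)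

/-- `u ↦ ⟨u,w⟩` is real-linear, hence its own derivative at every point. -/
lemma hasFDerivAt_cInner {V : Type*} [NormedAddCommGroup V] [InnerProductSpace ℝ V]
    [FiniteDimensional ℝ V] (J : Module.End ℝ V) (w u : V) :
    ∃ L : V →L[ℝ] ℂ, (∀ x, L x = cInner J x w) ∧ HasFDerivAt (fun x => cInner J x w) L u := by
  let l : V →ₗ[ℝ] ℂ :=
    { toFun := fun x => cInner J x w
      map_add' := fun x y => by
        simp only [cInner, map_add, inner_add_left, Complex.ofReal_add]
        ring
      map_smul' := fun a x => by
        simp only [cInner, map_smul, real_inner_smul_left, Complex.ofReal_mul, RingHom.id_apply,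
          Complex.real_smul]
        ring }
  exact ⟨l.toContinuousLinearMap, fun _ => rfl, l.toContinuousLinearMap.hasFDerivAt⟩

/-- The composite of two field operators on a `C²` function, fully expanded. -/
lemma bosonField_bosonField {V : Type*} [NormedAddCommGroup V] [InnerProductSpace ℝ V]
    [FiniteDimensional ℝ V] (J : Module.End ℝ V) {F : V → ℂ} (hF : ContDiff ℝ 2 F) (v w u : V) :
    bosonField J v (bosonField J w F) u =
      -2 * (4⁻¹ * cInner J u v * cInner J u w * F u - 2⁻¹ * cInner J u v * fderiv ℝ F u w
        - 2⁻¹ * cInner J v w * F u - 2⁻¹ * cInner J u w * fderiv ℝ F u v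
        + fderiv ℝ (fderiv ℝ F) u v w) := by
  obtain ⟨L, hL, hLd⟩ := hasFDerivAt_cInner J w u
  have hF1 : HasFDerivAt F (fderiv ℝ F u) u := (hF.differentiable (by norm_num) u).hasFDerivAt
  have hF2 : HasFDerivAt (fderiv ℝ F) (fderiv ℝ (fderiv ℝ F) u) u :=
    ((hF.fderiv_right (m := 1) (by norm_num)).differentiable (by norm_num) u).hasFDerivAt
  have hD : HasFDerivAt (bosonField J w F) _ u :=
    (((hLd.const_mul (2⁻¹ : ℂ)).mul hF1).sub
      (hF2.clm_apply (hasFDerivAt_const w u))).const_mul (-(Real.sqrt 2 : ℂ) * Complex.I)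
  have hc : (-(Real.sqrt 2 : ℂ) * Complex.I) * (-(Real.sqrt 2 : ℂ) * Complex.I) = -2 := by
    have h2 : (Real.sqrt 2 : ℂ) * (Real.sqrt 2 : ℂ) = 2 := by
      rw [← Complex.ofReal_mul, Real.mul_self_sqrt (by norm_num)]
      norm_num
    linear_combination (Real.sqrt 2 : ℂ) * (Real.sqrt 2 : ℂ) * Complex.I_mul_I - h2
  rw [bosonField, hD.fderiv]
  simp only [bosonField, smul_apply, sub_apply,
    add_apply, ContinuousLinearMap.comp_apply, ContinuousLinearMap.flip_apply,
    zero_apply, map_zero, smul_eq_mul, hL]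
  rw [← hc]
  ring

/-- For every twice continuously differentiable `F : V → ℂ` and all
`v, w ∈ V`, the canonical commutation relation
`φ(v)(φ(w)F) − φ(w)(φ(v)F) = 2i·s(v,w)·F` holds pointwise on `V`, where
`s(v,w) := d(Jv,w)`. -/
theorem stmt_18 {V : Type*} [NormedAddCommGroup V] [InnerProductSpace ℝ V]
    [FiniteDimensional ℝ V] (m : ℕ) (hdim : Module.finrank ℝ V = 2 * m)
    (J : Module.End ℝ V) (hJ2 : J * J = -1)
    (hJd : ∀ u v : V, ⟪J u, J v⟫ = ⟪u, v⟫)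
    (F : V → ℂ) (hF : ContDiff ℝ 2 F) (v w : V) :
    ∀ u : V, bosonField J v (bosonField J w F) u - bosonField J w (bosonField J v F) u =
      2 * Complex.I * Complex.ofReal ⟪J v, w⟫ * F u := by
  intro u
  have hsymm : fderiv ℝ (fderiv ℝ F) u v w = fderiv ℝ (fderiv ℝ F) u w v :=
    (hF.contDiffAt.isSymmSndFDerivAt (by simp)) v w
  have hskew : (⟪J w, v⟫ : ℝ) = -⟪J v, w⟫ := by
    have hJJ : J (J w) = -w := by
      simpa using LinearMap.congr_fun hJ2 w
    rw [← hJd (J w) v, hJJ, inner_neg_left, real_inner_comm]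
  rw [bosonField_bosonField J hF v w u, bosonField_bosonField J hF w v u, hsymm]
  simp only [cInner, hskew, real_inner_comm v w, Complex.ofReal_neg]
  ring
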